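/- arXiv:1806.01592 — 8 statements merged into one kernel-verified Lean document; each statement's English description precedes it below -/
import Mathlib

section
/- Let A be a complex Banach algebra, let e ∈ A satisfy ‖e‖ ≤ 1, and let φ be a character of A with φ(e) ≠ 0. If A is approximately φ-contractible, then A_e is approximately ψ-contractible where ψ = φ(e)·φ; that is, there exists a net (n_i) in A such that ψ(n_i) = 1 for all i and ‖a·e·n_i − ψ(a)·n_i‖ → 0 along the net for every a ∈ A. -/
open Filter Topology

/-- Let `A` be a complex Banach algebra, `e ∈ A` with `‖e‖ ≤ 1`,
and `φ` a character of `A` with `φ e ≠ 0`.  If `A` is approximately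
`φ`-contractible (there is a net `(m_i)` with `φ (m_i) = 1` and
`‖a * m_i - φ a • m_i‖ → 0` for all `a`), then `A_e` is approximately
`ψ`-contractible for `ψ = φ(e) • φ`: there is a net `(n_i)` with `ψ (n_i) = 1`
and `‖a * e * n_i - ψ a • n_i‖ → 0` for all `a`. -/
theorem stmt3 {A : Type*} [NonUnitalNormedRing A] [NormedSpace ℂ A]
    [IsScalarTower ℂ A A] [SMulCommClass ℂ A A] [CompleteSpace A]
    (e : A) (he : ‖e‖ ≤ 1)
    (φ : A →L[ℂ] ℂ) (hφ0 : φ ≠ 0) (hφ : ∀ a b : A, φ (a * b) = φ a * φ b)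
    (he0 : φ e ≠ 0)
    (hA : ∃ (ι : Type) (l : Filter ι), l.NeBot ∧ ∃ m : ι → A,
      (∀ i, φ (m i) = 1) ∧
      ∀ a : A, Tendsto (fun i => ‖a * m i - φ a • m i‖) l (𝓝 0)) :
    ∃ (ι : Type) (l : Filter ι), l.NeBot ∧ ∃ n : ι → A,
      (∀ i, φ e * φ (n i) = 1) ∧
      ∀ a : A, Tendsto (fun i => ‖a * e * n i - (φ e * φ a) • n i‖) l (𝓝 0) := by
  obtain ⟨ι, l, hl, m, hm, ht⟩ := hA
  refine ⟨ι, l, hl, fun i => (φ e)⁻¹ • m i, fun i => ?_, fun a => ?_⟩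
  · rw [map_smul, hm i, smul_eq_mul, mul_one, mul_inv_cancel₀ he0]
  · have h := (ht (a * e)).const_mul ‖(φ e)⁻¹‖
    rw [mul_zero] at h
    refine h.congr fun i => ?_
    rw [← norm_smul, smul_sub, mul_smul_comm, hφ, mul_comm (φ a), smul_comm]
end

section
/- Let A be a unital complex Banach algebra and let e ∈ A be invertible with ‖e‖ ≤ 1. Let ψ be a character of A_e (a nonzero continuous linear functional with ψ(a·e·b) = ψ(a)·ψ(b) for all a, b ∈ A) and define φ(a) = ψ(e⁻¹·a). If A_e is approximately ψ-contractible, i.e. there is a net (m_i) in A with ψ(m_i) = 1 for all i and ‖a·e·m_i − ψ(a)·m_i‖ → 0 for every a ∈ A, then A is approximately φ-contractible: there is a net (n_i) in A with φ(n_i) = 1 for all i and ‖a·n_i − φ(a)·n_i‖ → 0 for every a ∈ A. -/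
open Filter Topology

/-- Let `A` be a unital complex Banach algebra and `e ∈ A`
invertible with `‖e‖ ≤ 1` (two-sided inverse `f = e⁻¹`).  Let `ψ` be a character of
`A_e` (nonzero continuous linear, `ψ (a*e*b) = ψ a * ψ b`) and set
`φ a = ψ (e⁻¹ * a)`.  If `A_e` is approximately `ψ`-contractible (a net `(m_i)`
with `ψ (m_i) = 1` and `‖a * e * m_i - ψ a • m_i‖ → 0` for all `a`), then `A` is
approximately `φ`-contractible: a net `(n_i)` with `φ (n_i) = 1` and
`‖a * n_i - φ a • n_i‖ → 0` for all `a`. -/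
theorem stmt4 {A : Type*} [NormedRing A] [NormedAlgebra ℂ A] [CompleteSpace A]
    (e f : A) (he : ‖e‖ ≤ 1) (hef : e * f = 1) (hfe : f * e = 1)
    (ψ : A →L[ℂ] ℂ) (hψ0 : ψ ≠ 0) (hψ : ∀ a b : A, ψ (a * e * b) = ψ a * ψ b)
    (hAe : ∃ (ι : Type) (l : Filter ι), l.NeBot ∧ ∃ m : ι → A,
      (∀ i, ψ (m i) = 1) ∧
      ∀ a : A, Tendsto (fun i => ‖a * e * m i - ψ a • m i‖) l (𝓝 0)) :
    ∃ (ι : Type) (l : Filter ι), l.NeBot ∧ ∃ n : ι → A,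
      (∀ i, ψ (f * n i) = 1) ∧
      ∀ a : A, Tendsto (fun i => ‖a * n i - ψ (f * a) • n i‖) l (𝓝 0) := by
  obtain ⟨ι, l, hl, m, hm1, hm⟩ := hAe
  refine ⟨ι, l, hl, fun i => e * m i, fun i => ?_, fun a => ?_⟩
  · rw [← mul_assoc, hfe, one_mul, hm1]
  · refine squeeze_zero (fun i => norm_nonneg _) (fun i => ?_) (hm (f * a))
    have h : a * (e * m i) - ψ (f * a) • (e * m i)
        = e * (f * a * e * m i - ψ (f * a) • m i) := by
      rw [mul_sub, mul_smul_comm]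
      simp only [← mul_assoc]
      rw [hef, one_mul]
    rw [h]
    exact (norm_mul_le _ _).trans (mul_le_of_le_one_left (norm_nonneg _) he)
end

section
/- Let A be the complex Banach algebra of 3×3 upper triangular complex matrices and φ : A → ℂ the character φ(M) = M₃₃. Then A is not approximately φ-contractible: there is no nontrivial filter on an index type together with a family (m_i) in A such that φ(m_i) = 1 for all i and ‖a·m_i − φ(a)·m_i‖ → 0 along the filter for every a ∈ A. -/
open Filter Topology Matrix

/-- The algebra of 3×3 upper triangular complex matrices. -/
def UT3 : Subalgebra ℂ (Matrix (Fin 3) (Fin 3) ℂ) where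
  carrier := {M | M.BlockTriangular id}
  mul_mem' ha hb := ha.mul hb
  add_mem' ha hb := ha.add hb
  one_mem' := Matrix.blockTriangular_one
  zero_mem' := Matrix.blockTriangular_zero
  algebraMap_mem' c := by
    rw [Matrix.algebraMap_eq_diagonal]
    exact Matrix.blockTriangular_diagonal _

/-- The character `φ M = M₃₃` on `UT3`. -/
def φ33 (M : UT3) : ℂ := (M : Matrix (Fin 3) (Fin 3) ℂ) 2 2

theorem stmt5 :
    ¬ ∃ (ι : Type) (l : Filter ι), l.NeBot ∧ ∃ m : ι → UT3,
      (∀ i, φ33 (m i) = 1) ∧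
      ∀ a : UT3, Tendsto (fun i => a * m i - φ33 a • m i) l (𝓝 0) := by
  rintro ⟨ι, l, hl, m, hm, h⟩
  have hmem : (Matrix.single 0 2 1 : Matrix (Fin 3) (Fin 3) ℂ) ∈ UT3 := by
    change Matrix.BlockTriangular _ id
    intro i j hij
    fin_cases i <;> fin_cases j <;> simp_all [Matrix.single]
  have h1 := h ⟨_, hmem⟩
  have hc : Continuous (fun M : UT3 => (M : Matrix (Fin 3) (Fin 3) ℂ) 0 2) :=
    (continuous_apply_apply 0 2).comp continuous_subtype_val
  have h2 := (hc.tendsto 0).comp h1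
  have h3 : ((fun M : UT3 => (M : Matrix (Fin 3) (Fin 3) ℂ) 0 2) ∘
      fun i => (⟨_, hmem⟩ : UT3) * m i - φ33 ⟨_, hmem⟩ • m i) = fun _ => (1 : ℂ) := by
    funext i
    have := hm i
    simp only [φ33] at this
    simp [φ33, this]
  rw [h3] at h2
  have := tendsto_nhds_unique h2 tendsto_const_nhds
  simp at this
end

section
/- Let A be the complex Banach algebra of 3×3 upper triangular complex matrices, φ : A → ℂ the character φ(M) = M₃₃, and let e ∈ A be the upper triangular matrix all of whose entries on and above the diagonal equal 1/6 (so ‖e‖ ≤ 1 in the ℓ¹ norm and φ(e) = 1/6). Then A_e is not approximately ψ-contractible for ψ = φ(e)·φ = (1/6)·φ: there is no nontrivial filter on an index type together with a family (n_i) in A such that (1/6)·φ(n_i) = 1 for all i and ‖a·e·n_i − (1/6)·φ(a)·n_i‖ → 0 along the filter for every a ∈ A. -/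
open Filter Topology Matrix

/-- The element `e ∈ UT3` all of whose entries on and above the diagonal equal `1/6`. -/
noncomputable def eSix : UT3 :=
  ⟨Matrix.of fun i j => if i ≤ j then (1 / 6 : ℂ) else 0, by
    intro i j hij
    exact if_neg (not_le.mpr hij)⟩

/-- `A_e` (for `A` the 3×3 upper triangular matrices and `e` the
matrix with entries `1/6` on and above the diagonal) is not approximately
`ψ`-contractible for `ψ = φ(e)·φ = (1/6)·φ`, where `φ M = M₃₃`. -/
theorem stmt6 :
    ¬ ∃ (ι : Type) (l : Filter ι), l.NeBot ∧ ∃ n : ι → UT3,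
      (∀ i, (1 / 6 : ℂ) * φ33 (n i) = 1) ∧
      ∀ a : UT3,
        Tendsto (fun i => a * eSix * n i - ((1 / 6 : ℂ) * φ33 a) • n i) l (𝓝 0) := by
  rintro ⟨ι, l, hl, n, hn, h⟩
  have hE : (Matrix.of fun i j : Fin 3 => if i = 0 ∧ j = 2 then (1 : ℂ) else 0) ∈ UT3 := by
    intro i j hij
    simp only [id] at hij
    simp only [Matrix.of_apply]
    apply if_neg
    rintro ⟨rfl, rfl⟩
    exact absurd hij (by decide)
  have h1 := h ⟨_, hE⟩
  have hc : Continuous (fun M : UT3 => (M : Matrix (Fin 3) (Fin 3) ℂ) 0 2) :=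
    continuous_subtype_val.matrix_elem 0 2
  have h2 := (hc.tendsto 0).comp h1
  have h3 : ((fun M : UT3 => (M : Matrix (Fin 3) (Fin 3) ℂ) 0 2) ∘ fun i =>
      (⟨_, hE⟩ : UT3) * eSix * n i - ((1 / 6 : ℂ) * φ33 ⟨_, hE⟩) • n i) = fun _ => (1 : ℂ) := by
    funext i
    have := hn i
    simp [φ33] at this
    simp [φ33, eSix, Matrix.mul_apply, Fin.sum_univ_three, this]
  rw [h3] at h2
  have := tendsto_nhds_unique h2 tendsto_const_nhds
  simp at this
end

section
/- Let A be a complex Banach algebra, φ a character of A, and e ∈ A with ‖e‖ ≤ 1 and φ(e) ≠ 0. Suppose A is φ-biprojective in the algebraic sense: there exists a ℂ-linear map ρ : A → A⊗A with ρ(ab) = a·ρ(b) and ρ(ab) = ρ(a)·b for all a, b ∈ A, and φ(π_A(ρ(a))) = φ(a) for all a ∈ A. Then the map ρ̃ = φ(e)⁻¹·ρ witnesses that A_e is ψ-biprojective for ψ = φ(e)·φ: for all a, b ∈ A, ρ̃(a·e·b) = (a·e)·ρ̃(b) and ρ̃(a·e·b) = ρ̃(a)·(e·b), and ψ(π_e(ρ̃(a)))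 = ψ(a) for all a ∈ A, where π_e : A⊗A → A is the linear map with π_e(x⊗y) = x·e·y. -/
open TensorProduct

/-- Let `A` be a complex Banach algebra, `φ` a character of `A`,
`e ∈ A` with `‖e‖ ≤ 1` and `φ e ≠ 0`.  If `A` is `φ`-biprojective in the algebraic
sense (a `ℂ`-linear `ρ : A → A ⊗ A` which is an `A`-bimodule map with
`φ ∘ π_A ∘ ρ = φ`), then `ρ̃ = φ(e)⁻¹ • ρ` witnesses that `A_e` is
`ψ = φ(e)•φ`-biprojective: it is an `A_e`-bimodule map for the `A_e`-actions and
`ψ ∘ π_e ∘ ρ̃ = ψ`, where `π_e (x ⊗ y) = x * e * y`. -/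
theorem stmt7 {A : Type*} [NonUnitalNormedRing A] [NormedSpace ℂ A]
    [IsScalarTower ℂ A A] [SMulCommClass ℂ A A] [CompleteSpace A]
    (φ : A →L[ℂ] ℂ) (hφ0 : φ ≠ 0) (hφ : ∀ a b : A, φ (a * b) = φ a * φ b)
    (e : A) (he : ‖e‖ ≤ 1) (he0 : φ e ≠ 0)
    (ρ : A →ₗ[ℂ] TensorProduct ℂ A A)
    (hρl : ∀ a b : A,
      ρ (a * b) = LinearMap.rTensor A (LinearMap.mulLeft ℂ a) (ρ b))
    (hρr : ∀ a b : A,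
      ρ (a * b) = LinearMap.lTensor A (LinearMap.mulRight ℂ b) (ρ a))
    (hρπ : ∀ a : A, φ (LinearMap.mul' ℂ A (ρ a)) = φ a) :
    (∀ a b : A, (φ e)⁻¹ • ρ (a * e * b) =
      LinearMap.rTensor A (LinearMap.mulLeft ℂ (a * e)) ((φ e)⁻¹ • ρ b)) ∧
    (∀ a b : A, (φ e)⁻¹ • ρ (a * e * b) =
      LinearMap.lTensor A (LinearMap.mulRight ℂ (e * b)) ((φ e)⁻¹ • ρ a)) ∧
    (∀ a : A, φ e * φ (LinearMap.mul' ℂ A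
        (LinearMap.lTensor A (LinearMap.mulLeft ℂ e) ((φ e)⁻¹ • ρ a)))
      = φ e * φ a) := by
  have key : ∀ t : TensorProduct ℂ A A,
      φ (LinearMap.mul' ℂ A (LinearMap.lTensor A (LinearMap.mulLeft ℂ e) t))
        = φ e * φ (LinearMap.mul' ℂ A t) := by
    intro t
    induction t using TensorProduct.induction_on with
    | zero => simp
    | tmul x y =>
      simp only [LinearMap.lTensor_tmul, LinearMap.mul'_apply, LinearMap.mulLeft_apply, hφ]
      ring
    | add x y hx hy => simp only [map_add, hx, hy, mul_add]
  refine ⟨fun a b => ?_, fun a b => ?_, fun a => ?_⟩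
  · rw [map_smul, hρl]
  · rw [map_smul, mul_assoc, hρr]
  · rw [key, map_smul, map_smul, hρπ, smul_eq_mul, mul_inv_cancel_left₀ he0]
end

section
/- Let A be a complex Banach algebra, φ a character of A, and e ∈ A with ‖e‖ ≤ 1 and φ(e) ≠ 0. Suppose A is approximately left φ-biprojective: there is a net of continuous linear maps ρ_i : A → A⊗A (A⊗A carrying the projective tensor seminorm) such that for all a, b ∈ A: ρ_i(ab) − φ(a)·ρ_i(b) → 0 and ρ_i(ba) − ρ_i(b)·a → 0 in A⊗A, and π_A(ρ_i(a)) → a in A. Then A_e is approximately left ψ-biprojective for ψ = φ(e)·φ: there is a net of continuous linear maps σ_i : A → A⊗A such that for all a, b ∈ A: σ_i(a·e·b) − ψ(a)·σ_i(b) → 0 and σ_i(a·e·b) − σ_i(a)·(e·b) → 0 in A⊗A, and ψ(π_e(σ_i(a))) − ψ(a) → 0, where π_e : A⊗A → A is the linear map with π_e(x⊗y) = x·e·y. -/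
open Filter Topology TensorProduct

/-- The projective tensor seminorm on the algebraic tensor product `A ⊗[ℂ] A`:
the infimum of `∑ ‖xᵢ‖‖yᵢ‖` over all representations `z = ∑ xᵢ ⊗ yᵢ`. -/
noncomputable def projSN {A : Type*} [NonUnitalNormedRing A] [NormedSpace ℂ A]
    (z : TensorProduct ℂ A A) : ℝ :=
  sInf {r : ℝ | ∃ (n : ℕ) (x y : Fin n → A),
    z = ∑ i, x i ⊗ₜ[ℂ] y i ∧ r = ∑ i, ‖x i‖ * ‖y i‖}

theorem projSN_nonneg' {A : Type*} [NonUnitalNormedRing A] [NormedSpace ℂ A]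
    (z : TensorProduct ℂ A A) : 0 ≤ projSN z := by
  apply Real.sInf_nonneg
  rintro r ⟨n, x, y, -, rfl⟩
  positivity

theorem projSN_set_nonempty {A : Type*} [NonUnitalNormedRing A] [NormedSpace ℂ A]
    (z : TensorProduct ℂ A A) : {r : ℝ | ∃ (n : ℕ) (x y : Fin n → A),
    z = ∑ i, x i ⊗ₜ[ℂ] y i ∧ r = ∑ i, ‖x i‖ * ‖y i‖}.Nonempty := by
  suffices h : ∃ (n : ℕ) (x y : Fin n → A), z = ∑ i, x i ⊗ₜ[ℂ] y i by
    obtain ⟨n, x, y, h⟩ := h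
    exact ⟨_, n, x, y, h, rfl⟩
  induction z using TensorProduct.induction_on with
  | zero => exact ⟨0, fun _ => 0, fun _ => 0, by simp⟩
  | tmul a b => exact ⟨1, fun _ => a, fun _ => b, by simp⟩
  | add u v hu hv =>
    obtain ⟨n, x, y, rfl⟩ := hu
    obtain ⟨m, x', y', rfl⟩ := hv
    exact ⟨n + m, Fin.append x x', Fin.append y y', by simp [Fin.sum_univ_add]⟩

theorem projSN_smul_le {A : Type*} [NonUnitalNormedRing A] [NormedSpace ℂ A]
    (c : ℂ) (z : TensorProduct ℂ A A) : projSN (c • z) ≤ ‖c‖ * projSN z := by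
  unfold projSN
  rw [← smul_eq_mul, ← Real.sInf_smul_of_nonneg (norm_nonneg c)]
  apply le_csInf ((projSN_set_nonempty z).smul_set)
  rintro _ ⟨r, ⟨n, x, y, rfl, rfl⟩, rfl⟩
  apply csInf_le
  · refine ⟨0, ?_⟩
    rintro r ⟨n, x, y, -, rfl⟩
    positivity
  · refine ⟨n, fun i => c • x i, y, ?_, ?_⟩
    · simp [Finset.smul_sum, TensorProduct.smul_tmul']
    · simp [Finset.mul_sum, norm_smul, mul_assoc]

theorem projSN_tendsto_smul {A : Type*} [NonUnitalNormedRing A] [NormedSpace ℂ A]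
    {ι : Type} {l : Filter ι} (c : ℂ) (f : ι → TensorProduct ℂ A A)
    (h : Tendsto (fun i => projSN (f i)) l (𝓝 0)) :
    Tendsto (fun i => projSN (c • f i)) l (𝓝 0) := by
  refine squeeze_zero (fun i => projSN_nonneg' _) (fun i => projSN_smul_le c _) ?_
  simpa using h.const_mul ‖c‖

/-- Let `A` be a complex Banach algebra, `φ` a character of `A`,
`e ∈ A` with `‖e‖ ≤ 1` and `φ e ≠ 0`.  If `A` is approximately left
`φ`-biprojective (a net of continuous linear maps `ρᵢ : A → A ⊗ A` with
`ρᵢ(ab) − φ(a)ρᵢ(b) → 0`, `ρᵢ(ba) − ρᵢ(b)·a → 0` in the projective tensor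
seminorm and `π_A(ρᵢ(a)) → a`), then `A_e` is approximately left
`ψ = φ(e)•φ`-biprojective, with `π_e (x ⊗ y) = x*e*y`.
(Continuity of a linear map into `A ⊗ A` is expressed as boundedness for the
projective seminorm.) -/
theorem stmt8 {A : Type*} [NonUnitalNormedRing A] [NormedSpace ℂ A]
    [IsScalarTower ℂ A A] [SMulCommClass ℂ A A] [CompleteSpace A]
    (φ : A →L[ℂ] ℂ) (hφ0 : φ ≠ 0) (hφ : ∀ a b : A, φ (a * b) = φ a * φ b)
    (e : A) (he : ‖e‖ ≤ 1) (he0 : φ e ≠ 0)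
    (hA : ∃ (ι : Type) (l : Filter ι), l.NeBot ∧
      ∃ ρ : ι → (A →ₗ[ℂ] TensorProduct ℂ A A),
        (∀ i, ∃ C : ℝ, ∀ a : A, projSN (ρ i a) ≤ C * ‖a‖) ∧
        (∀ a b : A, Tendsto
          (fun i => projSN (ρ i (a * b) - φ a • ρ i b)) l (𝓝 0)) ∧
        (∀ a b : A, Tendsto
          (fun i => projSN (ρ i (b * a) -
            LinearMap.lTensor A (LinearMap.mulRight ℂ a) (ρ i b))) l (𝓝 0)) ∧
        (∀ a : A, Tendsto
          (fun i => ‖LinearMap.mul' ℂ A (ρ i a) - a‖) l (𝓝 0))) :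
    ∃ (ι : Type) (l : Filter ι), l.NeBot ∧
      ∃ σ : ι → (A →ₗ[ℂ] TensorProduct ℂ A A),
        (∀ i, ∃ C : ℝ, ∀ a : A, projSN (σ i a) ≤ C * ‖a‖) ∧
        (∀ a b : A, Tendsto
          (fun i => projSN (σ i (a * e * b) - (φ e * φ a) • σ i b)) l (𝓝 0)) ∧
        (∀ a b : A, Tendsto
          (fun i => projSN (σ i (a * e * b) -
            LinearMap.lTensor A (LinearMap.mulRight ℂ (e * b)) (σ i a))) l (𝓝 0)) ∧
        (∀ a : A, Tendsto
          (fun i => φ e * φ (LinearMap.mul' ℂ A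
              (LinearMap.lTensor A (LinearMap.mulLeft ℂ e) (σ i a))) - φ e * φ a)
          l (𝓝 0)) := by
  obtain ⟨ι, l, hl, ρ, h1, h2, h3, h4⟩ := hA
  refine ⟨ι, l, hl, fun i => (φ e)⁻¹ • ρ i, ?_, ?_, ?_, ?_⟩
  · intro i
    obtain ⟨C, hC⟩ := h1 i
    refine ⟨‖(φ e)⁻¹‖ * C, fun a => ?_⟩
    rw [mul_assoc]
    exact (projSN_smul_le _ _).trans (mul_le_mul_of_nonneg_left (hC a) (norm_nonneg _))
  · intro a b
    convert projSN_tendsto_smul (φ e)⁻¹ _ (h2 (a * e) b) using 3 with i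
    rw [hφ, smul_sub, LinearMap.smul_apply, LinearMap.smul_apply, smul_comm, mul_comm (φ e)]
  · intro a b
    convert projSN_tendsto_smul (φ e)⁻¹ _ (h3 (e * b) a) using 3 with i
    rw [smul_sub, LinearMap.smul_apply, LinearMap.smul_apply, map_smul, mul_assoc]
  · intro a
    have key : ∀ z : TensorProduct ℂ A A, φ (LinearMap.mul' ℂ A
        (LinearMap.lTensor A (LinearMap.mulLeft ℂ e) z)) = φ e * φ (LinearMap.mul' ℂ A z) := by
      intro z
      induction z using TensorProduct.induction_on with
      | zero => simp
      | tmul x y => simp [hφ]; ring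
      | add u v hu hv => simp only [map_add, hu, hv]; ring
    have h5 := (tendsto_zero_iff_norm_tendsto_zero.2 (h4 a))
    have h6 := ((φ.continuous.tendsto 0).comp h5).const_mul (φ e)
    rw [map_zero, mul_zero] at h6
    refine h6.congr fun i => ?_
    simp only [Function.comp, key, LinearMap.smul_apply, map_smul, map_sub, smul_eq_mul]
    field_simp
end

section
/- Let A and B be complex Banach algebras, e_A ∈ A and e_B ∈ B with ‖e_A‖ ≤ 1 and ‖e_B‖ ≤ 1, and let φ_A, φ_B be characters of A and B with φ_A(e_A) ≠ 0 and φ_B(e_B) ≠ 0. Suppose A is φ_A-biprojective and B is φ_B-biprojective in the algebraic sense (for A: there exists a ℂ-linear map ρ₀ : A → A⊗A with ρ₀(ab) = a·ρ₀(b), ρ₀(ab) = ρ₀(a)·b for all a, b ∈ A, and φ_A(π_A(ρ₀(a))) = φ_A(a) for all a ∈ A; similarly for B). Let C = A ⊗[ℂ] B be the tensor product algebra with product (a₁⊗b₁)(a₂⊗b₂) = (a₁a₂)⊗(b₁b₂), let E = e_A⊗e_B ∈ C, and let ψ : C → ℂ be the linear functional with ψ(a⊗b) = φ_A(e_A)φ_A(a)·φ_B(e_B)φ_B(b).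 Then there exists a ℂ-linear map ρ : C → C⊗C such that for all u, v ∈ C: ρ(u·E·v) = (u·E)·ρ(v) and ρ(u·E·v) = ρ(u)·(E·v) (with the bimodule actions c·(x⊗y) = (c·x)⊗y, (x⊗y)·c = x⊗(y·c) on C⊗C), and ψ(π_E(ρ(u))) = ψ(u) for all u ∈ C, where π_E : C⊗C → C is the linear map with π_E(x⊗y) = x·E·y; that is, C_E is ψ-biprojective in the algebraic sense. -/
open TensorProduct

/-- Let `A`, `B` be complex Banach algebras, `e_A ∈ A`, `e_B ∈ B`
with `‖e_A‖ ≤ 1`, `‖e_B‖ ≤ 1`, and characters `φ_A`, `φ_B` with `φ_A e_A ≠ 0`,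
`φ_B e_B ≠ 0`.  If `A` is `φ_A`-biprojective and `B` is `φ_B`-biprojective in the
algebraic sense, then `C_E` is `ψ`-biprojective in the algebraic sense, where
`C = A ⊗[ℂ] B` is the tensor product algebra, `E = e_A ⊗ e_B`, and
`ψ (a ⊗ b) = φ_A(e_A)φ_A(a) · φ_B(e_B)φ_B(b)`. -/
theorem stmt9 {A B : Type*}
    [NonUnitalNormedRing A] [NormedSpace ℂ A]
    [IsScalarTower ℂ A A] [SMulCommClass ℂ A A] [CompleteSpace A]
    [NonUnitalNormedRing B] [NormedSpace ℂ B]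
    [IsScalarTower ℂ B B] [SMulCommClass ℂ B B] [CompleteSpace B]
    (eA : A) (eB : B) (heA : ‖eA‖ ≤ 1) (heB : ‖eB‖ ≤ 1)
    (φA : A →L[ℂ] ℂ) (hφA0 : φA ≠ 0) (hφA : ∀ a b : A, φA (a * b) = φA a * φA b)
    (φB : B →L[ℂ] ℂ) (hφB0 : φB ≠ 0) (hφB : ∀ a b : B, φB (a * b) = φB a * φB b)
    (heA0 : φA eA ≠ 0) (heB0 : φB eB ≠ 0)
    (hA : ∃ ρ₀ : A →ₗ[ℂ] TensorProduct ℂ A A,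
      (∀ a b : A, ρ₀ (a * b) = LinearMap.rTensor A (LinearMap.mulLeft ℂ a) (ρ₀ b)) ∧
      (∀ a b : A, ρ₀ (a * b) = LinearMap.lTensor A (LinearMap.mulRight ℂ b) (ρ₀ a)) ∧
      (∀ a : A, φA (LinearMap.mul' ℂ A (ρ₀ a)) = φA a))
    (hB : ∃ ρ₁ : B →ₗ[ℂ] TensorProduct ℂ B B,
      (∀ a b : B, ρ₁ (a * b) = LinearMap.rTensor B (LinearMap.mulLeft ℂ a) (ρ₁ b)) ∧
      (∀ a b : B, ρ₁ (a * b) = LinearMap.lTensor B (LinearMap.mulRight ℂ b) (ρ₁ a)) ∧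
      (∀ a : B, φB (LinearMap.mul' ℂ B (ρ₁ a)) = φB a)) :
    ∃ ρ : (TensorProduct ℂ A B) →ₗ[ℂ]
        TensorProduct ℂ (TensorProduct ℂ A B) (TensorProduct ℂ A B),
      (∀ u v : TensorProduct ℂ A B,
        ρ (u * (eA ⊗ₜ[ℂ] eB) * v) =
          LinearMap.rTensor (TensorProduct ℂ A B)
            (LinearMap.mulLeft ℂ (u * (eA ⊗ₜ[ℂ] eB))) (ρ v)) ∧
      (∀ u v : TensorProduct ℂ A B,
        ρ (u * (eA ⊗ₜ[ℂ] eB) * v) =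
          LinearMap.lTensor (TensorProduct ℂ A B)
            (LinearMap.mulRight ℂ ((eA ⊗ₜ[ℂ] eB) * v)) (ρ u)) ∧
      (∀ u : TensorProduct ℂ A B,
        ((φA eA * φB eB) •
            ((TensorProduct.lid ℂ ℂ).toLinearMap ∘ₗ
              TensorProduct.map (φA : A →ₗ[ℂ] ℂ) (φB : B →ₗ[ℂ] ℂ)))
          ((LinearMap.mul' ℂ (TensorProduct ℂ A B))
            (LinearMap.lTensor (TensorProduct ℂ A B)
              (LinearMap.mulLeft ℂ (eA ⊗ₜ[ℂ] eB)) (ρ u))) =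
        ((φA eA * φB eB) •
            ((TensorProduct.lid ℂ ℂ).toLinearMap ∘ₗ
              TensorProduct.map (φA : A →ₗ[ℂ] ℂ) (φB : B →ₗ[ℂ] ℂ))) u) := by
  obtain ⟨ρ₀, hA1, hA2, hA3⟩ := hA
  obtain ⟨ρ₁, hB1, hB2, hB3⟩ := hB
  have hc : φA eA * φB eB ≠ 0 := mul_ne_zero heA0 heB0
  let T := (TensorProduct.tensorTensorTensorComm ℂ A A B B).toLinearMap
  let σ : (TensorProduct ℂ A B) →ₗ[ℂ]
        TensorProduct ℂ (TensorProduct ℂ A B) (TensorProduct ℂ A B) :=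
    T ∘ₗ TensorProduct.map ρ₀ ρ₁
  have hσ : ∀ a b, σ (a ⊗ₜ[ℂ] b) = T (ρ₀ a ⊗ₜ[ℂ] ρ₁ b) := fun a b => rfl
  have hT : ∀ a a' b b', T ((a ⊗ₜ[ℂ] a') ⊗ₜ[ℂ] (b ⊗ₜ[ℂ] b')) =
      (a ⊗ₜ[ℂ] b) ⊗ₜ[ℂ] (a' ⊗ₜ[ℂ] b') := fun a a' b b' => rfl
  have hL : ∀ w v, σ (w * v) = LinearMap.rTensor (TensorProduct ℂ A B)
      (LinearMap.mulLeft ℂ w) (σ v) := by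
    intro w v
    induction w using TensorProduct.induction_on with
    | zero =>
      rw [zero_mul, LinearMap.mulLeft_zero_eq_zero, LinearMap.rTensor_zero]; simp
    | add x y hx hy =>
      have : LinearMap.mulLeft ℂ (x + y) = LinearMap.mulLeft ℂ x + LinearMap.mulLeft ℂ y := by
        ext; simp [add_mul]
      rw [add_mul, map_add, hx, hy, this, LinearMap.rTensor_add, LinearMap.add_apply]
    | tmul a b =>
      induction v using TensorProduct.induction_on with
      | zero => simp
      | add x y hx hy => rw [mul_add, map_add, hx, hy, map_add, map_add]
      | tmul a' b' =>
        rw [Algebra.TensorProduct.tmul_mul_tmul, hσ, hσ, hA1, hB1]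
        generalize ρ₀ a' = p
        generalize ρ₁ b' = q
        induction p using TensorProduct.induction_on with
        | zero => simp
        | add x y hx hy => simp only [map_add, TensorProduct.add_tmul, hx, hy]
        | tmul x y =>
          induction q using TensorProduct.induction_on with
          | zero => simp
          | add x y hx hy => simp only [map_add, TensorProduct.tmul_add, hx, hy]
          | tmul z w => simp [hT]
  have hR : ∀ w v, σ (w * v) = LinearMap.lTensor (TensorProduct ℂ A B)
      (LinearMap.mulRight ℂ v) (σ w) := by
    intro w v
    induction v using TensorProduct.induction_on with
    | zero =>
      rw [mul_zero, LinearMap.mulRight_zero_eq_zero, LinearMap.lTensor_zero]; simp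
    | add x y hx hy =>
      have : LinearMap.mulRight ℂ (x + y) = LinearMap.mulRight ℂ x + LinearMap.mulRight ℂ y := by
        ext; simp [mul_add]
      rw [mul_add, map_add, hx, hy, this, LinearMap.lTensor_add, LinearMap.add_apply]
    | tmul a b =>
      induction w using TensorProduct.induction_on with
      | zero => simp
      | add x y hx hy => rw [add_mul, map_add, hx, hy, map_add, map_add]
      | tmul a' b' =>
        rw [Algebra.TensorProduct.tmul_mul_tmul, hσ, hσ, hA2, hB2]
        generalize ρ₀ a' = p
        generalize ρ₁ b' = q
        induction p using TensorProduct.induction_on with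
        | zero => simp
        | add x y hx hy => simp only [map_add, TensorProduct.add_tmul, hx, hy]
        | tmul x y =>
          induction q using TensorProduct.induction_on with
          | zero => simp
          | add x y hx hy => simp only [map_add, TensorProduct.tmul_add, hx, hy]
          | tmul z w => simp [hT]
  have hP : ∀ p q, ((TensorProduct.lid ℂ ℂ).toLinearMap ∘ₗ
              TensorProduct.map (φA : A →ₗ[ℂ] ℂ) (φB : B →ₗ[ℂ] ℂ))
          ((LinearMap.mul' ℂ (TensorProduct ℂ A B))
            (LinearMap.lTensor (TensorProduct ℂ A B)
              (LinearMap.mulLeft ℂ (eA ⊗ₜ[ℂ] eB)) (T (p ⊗ₜ[ℂ] q)))) =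
        (φA eA * φB eB) * (φA (LinearMap.mul' ℂ A p) * φB (LinearMap.mul' ℂ B q)) := by
    intro p q
    induction p using TensorProduct.induction_on with
    | zero => simp
    | add x y hx hy => simp only [map_add, TensorProduct.add_tmul, hx, hy]; ring
    | tmul x y =>
      induction q using TensorProduct.induction_on with
      | zero => simp
      | add x y hx hy => simp only [map_add, TensorProduct.tmul_add, hx, hy]; ring
      | tmul z w =>
        simp [hT, hφA, hφB]
        ring
  refine ⟨(φA eA * φB eB)⁻¹ • σ, ?_, ?_, ?_⟩
  · intro u v
    rw [LinearMap.smul_apply, LinearMap.smul_apply, hL, map_smul]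
  · intro u v
    rw [LinearMap.smul_apply, LinearMap.smul_apply, mul_assoc, hR, map_smul]
  · intro u
    rw [LinearMap.smul_apply, LinearMap.smul_apply, LinearMap.smul_apply]
    congr 1
    rw [map_smul, map_smul, map_smul]
    induction u using TensorProduct.induction_on with
    | zero => simp
    | add x y hx hy => rw [map_add, map_add, map_add, map_add, map_add, smul_add, hx, hy]
    | tmul a b =>
      rw [hσ, hP, hA3, hB3, smul_eq_mul, inv_mul_cancel_left₀ hc]
      simp
end

section
/- Let A be the complex Banach algebra of 3×3 upper triangular complex matrices (ℓ¹ norm on the entries), and let e ∈ A be the matrix with e₁₁ = e₁₂ = e₂₂ = e₃₃ = 1/4 and all other entries 0 (so ‖e‖ ≤ 1 and e is invertible in A). Then A_e is not Johnson pseudo-contractible: since A is finite-dimensional (so that the bidual of the projective tensor product A ⊗_p A identifies canonically with A⊗A), this means there is no nontrivial filter on an index type together with a family (m_i) in A⊗A such that for every a ∈ A and every i, a ∗ m_i = m_i ∗ a (where a ∗ (x⊗y) = (a·e·x)⊗y and (x⊗y) ∗ a = x⊗(y·e·a), extended linearly), and π_e(m_i)·e·a − a → 0 along the filter for every a ∈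 A, where π_e : A⊗A → A is the linear map with π_e(x⊗y) = x·e·y. -/
open Filter Topology Matrix TensorProduct

set_option synthInstance.maxHeartbeats 1000000

/-- The element `e ∈ UT3` with `e₁₁ = e₁₂ = e₂₂ = e₃₃ = 1/4` and other entries `0`. -/
noncomputable def eQ : UT3 :=
  ⟨!![(1/4 : ℂ), 1/4, 0; 0, 1/4, 0; 0, 0, 1/4], by
    intro i j hij
    fin_cases i <;> fin_cases j <;> simp_all [Matrix.vecHead, Matrix.vecTail]⟩

/-- The map `π_e : A ⊗ A → A`, `x ⊗ y ↦ x * e * y`, for `A = UT3`, `e = eQ`. -/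
noncomputable def πe : TensorProduct ℂ UT3 UT3 →ₗ[ℂ] UT3 :=
  (LinearMap.mul' ℂ UT3) ∘ₗ
    LinearMap.lTensor (UT3 : Type _) (LinearMap.mulLeft ℂ eQ)

/-- The matrix unit in position (1,3). -/
noncomputable def aux_E : UT3 :=
  ⟨!![(0 : ℂ), 0, 1; 0, 0, 0; 0, 0, 0], by
    intro i j hij
    fin_cases i <;> fin_cases j <;> simp_all [Matrix.vecHead, Matrix.vecTail]⟩

/-- Entry functionals. -/
noncomputable def aux_ent (i j : Fin 3) : UT3 →ₗ[ℂ] ℂ where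
  toFun x := x.1 i j
  map_add' _ _ := rfl
  map_smul' _ _ := rfl

/-- The separating functional. -/
noncomputable def aux_phi : TensorProduct ℂ UT3 UT3 →ₗ[ℂ] ℂ :=
  LinearMap.mul' ℂ ℂ ∘ₗ TensorProduct.map (aux_ent 0 2) (aux_ent 2 2)

theorem aux_low (y : UT3) : y.1 2 0 = 0 ∧ y.1 2 1 = 0 :=
  ⟨y.2 (by decide), y.2 (by decide)⟩

theorem aux_l : aux_phi ∘ₗ LinearMap.rTensor (UT3 : Type _) (LinearMap.mulLeft ℂ (aux_E * eQ))
    = aux_ent 2 2 ∘ₗ πe := by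
  apply TensorProduct.ext'
  intro x y
  obtain ⟨hx, hx'⟩ := aux_low x
  obtain ⟨hy, hy'⟩ := aux_low y
  change ((aux_E.1 * eQ.1) * x.1) 0 2 * y.1 2 2 = (x.1 * (eQ.1 * y.1)) 2 2
  simp [aux_E, eQ, Matrix.mul_apply, Matrix.vecMul, dotProduct, Fin.sum_univ_three, hx, hx', hy, hy']
  try ring

theorem aux_r : aux_phi ∘ₗ LinearMap.lTensor (UT3 : Type _) (LinearMap.mulRight ℂ (eQ * aux_E))
    = 0 := by
  apply TensorProduct.ext'
  intro x y
  obtain ⟨hy, hy'⟩ := aux_low y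
  change x.1 0 2 * (y.1 * (eQ.1 * aux_E.1)) 2 2 = 0
  simp [aux_E, eQ, Matrix.mul_apply, Fin.sum_univ_three, hy, hy']

/-- For `A` the 3×3 upper triangular complex matrices and `e`
the matrix with `e₁₁ = e₁₂ = e₂₂ = e₃₃ = 1/4`, `A_e` is not Johnson
pseudo-contractible.  Since `A` is finite dimensional, `(A ⊗_p A)**` identifies
with `A ⊗ A`, so this says: there is no nontrivial filter together with a family
`(m_i)` in `A ⊗ A` with `a ∗ m_i = m_i ∗ a` for all `a` and `i` (the `A_e`-module
actions being `a ∗ (x ⊗ y) = (a*e*x) ⊗ y` and `(x ⊗ y) ∗ a = x ⊗ (y*e*a)`), and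
`π_e(m_i)*e*a − a → 0` for every `a`, where `π_e (x ⊗ y) = x*e*y`. -/
theorem stmt13 :
    ¬ ∃ (ι : Type) (l : Filter ι), l.NeBot ∧ ∃ m : ι → TensorProduct ℂ UT3 UT3,
      (∀ (a : UT3) (i : ι),
        LinearMap.rTensor (UT3 : Type _) (LinearMap.mulLeft ℂ (a * eQ)) (m i) =
          LinearMap.lTensor (UT3 : Type _) (LinearMap.mulRight ℂ (eQ * a)) (m i)) ∧
      (∀ a : UT3,
        Tendsto (fun i => πe (m i) * eQ * a - a) l (𝓝 0)) := by
  rintro ⟨ι, l, hl, m, h1, h2⟩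
  have h3 : ∀ i, (πe (m i)).1 2 2 = 0 := fun i => by
    have h := congrArg aux_phi (h1 aux_E i)
    have e1 := LinearMap.congr_fun aux_l (m i)
    have e2 := LinearMap.congr_fun aux_r (m i)
    simp only [LinearMap.comp_apply] at e1 e2
    rw [e1, e2] at h
    exact h
  have hc : Continuous (fun x : UT3 => x.1 2 2) :=
    continuous_subtype_val.matrix_elem 2 2
  have h4 := (hc.tendsto 0).comp (h2 1)
  have h5 : ((fun x : UT3 => x.1 2 2) ∘ fun i => πe (m i) * eQ * 1 - 1) = fun _ => (-1 : ℂ) := by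
    funext i
    have hh := aux_low (πe (m i))
    simp [eQ, Matrix.mul_apply, Fin.sum_univ_three, h3, hh.1, hh.2]
  rw [h5] at h4
  have h6 := tendsto_nhds_unique h4 tendsto_const_nhds
  simp at h6
end
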